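/- Each of the permutations 215463, 236145 and 214653 is an annihilator: every permutation π that contains an interval copy of 215463, or an interval copy of 236145, or an interval copy of 214653, satisfies μ(1,π) = 0. -/

import Mathlib

/-!
The permutation pattern poset and its Möbius function.

A permutation of length `n` is represented as an element of the symmetric
group on `Fin n`; the collection of all permutations of all lengths is the
sigma type `PPerm`.  Pattern containment `PPerm.Le` makes `PPerm` into the
permutation pattern poset, and `mu` is its Möbius function, defined by the
usual recursion `μ(σ,σ) = 1`, `μ(σ,π) = -∑_{σ ≤ λ < π} μ(σ,λ)` for `σ < π`
and `μ(σ,π) = 0` otherwise.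
-/

open scoped Classical

/-- A permutation of an arbitrary finite length `n`, as an element of the
symmetric group on `Fin n`. -/
abbrev PPerm : Type := Σ n : ℕ, Equiv.Perm (Fin n)

namespace PPerm

/-- Classical pattern containment `σ ≤ π`: there is a strictly increasing map
of positions along which `π` realises the same relative order as `σ`. -/
def Le (σ π : PPerm) : Prop :=
  ∃ f : Fin σ.1 → Fin π.1, StrictMono f ∧
    ∀ a b : Fin σ.1, σ.2 a < σ.2 b ↔ π.2 (f a) < π.2 (f b)

/-- Strict pattern containment. -/
def Lt (σ π : PPerm) : Prop := Le σ π ∧ σ ≠ π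

/-- The permutation `1` of length one. -/
def one : PPerm := ⟨1, 1⟩

/-- The direct sum `α ⊕ β` of two permutations: `β` is placed after and
above `α`. -/
def dsum (α β : PPerm) : PPerm :=
  ⟨α.1 + β.1, finSumFinEquiv.symm.trans ((Equiv.sumCongr α.2 β.2).trans finSumFinEquiv)⟩

end PPerm

/-- Fuelled recursion computing the Möbius function of the permutation
pattern poset.  Any `λ` with `σ ≤ λ < π` has length `< |π|`, so for any
fuel `≥ |π| + 1` this computes the standard recursion
`μ(σ,σ) = 1`, `μ(σ,π) = -∑_{σ ≤ λ < π} μ(σ,λ)` for `σ < π`, and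
`μ(σ,π) = 0` when `σ ≰ π`. -/
noncomputable def muAux : ℕ → PPerm → PPerm → ℤ
  | 0, _, _ => 0
  | n + 1, σ, π =>
    if σ = π then 1
    else if PPerm.Le σ π then
      - ∑ m ∈ Finset.range π.1,
          ∑ p ∈ Finset.univ.filter
              (fun p : Equiv.Perm (Fin m) => PPerm.Le σ ⟨m, p⟩ ∧ PPerm.Le ⟨m, p⟩ π),
            muAux n σ ⟨m, p⟩
    else 0

/-- The Möbius function of the permutation pattern poset. -/
noncomputable def mu (σ π : PPerm) : ℤ := muAux (π.1 + 1) σ π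

/-- The closed interval `[σ, π]` of the permutation pattern poset, as a
finset (any `λ ≤ π` has length `≤ |π|`). -/
noncomputable def intervalCC (σ π : PPerm) : Finset PPerm :=
  (Finset.range (π.1 + 1)).biUnion fun m =>
    (Finset.univ.filter fun p : Equiv.Perm (Fin m) =>
        PPerm.Le σ ⟨m, p⟩ ∧ PPerm.Le ⟨m, p⟩ π).image fun p => (⟨m, p⟩ : PPerm)

/-- The half-open interval `[σ, π)` of the permutation pattern poset. -/
noncomputable def intervalCO (σ π : PPerm) : Finset PPerm :=
  (intervalCC σ π).filter fun lam => lam ≠ π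

/-- `π` contains an interval copy of `α`: there is a set of `|α|` contiguous
positions of `π` (starting at position `i`), whose values form a contiguous
range (starting at value `v`), and whose entries are order-isomorphic
to `α`. -/
def HasIntervalCopy (π α : PPerm) : Prop :=
  ∃ (f : Fin α.1 → Fin π.1) (i v : ℕ),
    (∀ a : Fin α.1, (f a : ℕ) = i + (a : ℕ)) ∧
    (∀ a : Fin α.1, v ≤ (π.2 (f a) : ℕ) ∧ (π.2 (f a) : ℕ) < v + α.1) ∧
    (∀ a b : Fin α.1, α.2 a < α.2 b ↔ π.2 (f a) < π.2 (f b))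

/-- The permutation `215463` (0-indexed values `1 0 4 3 5 2`). -/
noncomputable def p215463 : PPerm :=
  ⟨6, Equiv.ofBijective (![1, 0, 4, 3, 5, 2] : Fin 6 → Fin 6) (by decide)⟩

/-- The permutation `236145` (0-indexed values `1 2 5 0 3 4`). -/
noncomputable def p236145 : PPerm :=
  ⟨6, Equiv.ofBijective (![1, 2, 5, 0, 3, 4] : Fin 6 → Fin 6) (by decide)⟩

/-- The permutation `214653` (0-indexed values `1 0 3 5 4 2`). -/
noncomputable def p214653 : PPerm :=
  ⟨6, Equiv.ofBijective (![1, 0, 3, 5, 4, 2] : Fin 6 → Fin 6) (by decide)⟩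

/-!
If weighted lower intervals `[σ, α i]` with `σ < α i < π` cover every `λ ∈ [σ, π)` with
`μ(σ, λ) ≠ 0` with total weight one, then `μ(σ, π) = 0`, since the Möbius function sums to zero
over each of them.

Let `π` have disjoint interval copies of `x` and `y`. Inside these copies an occurrence of a pattern
may be replaced by any order isomorphic one, so whether the pattern survives when the copies are
shrunk depends only on the traces of its occurrences on `x` and `y`. The `α i` are taken to be
permutations obtained from `π` by shrinking the copies, and the covering condition becomes a finite
condition on patterns of `x` and `y`, whatever `π` is. Patterns with vanishing Möbius function need
not be covered: by induction on the length this concerns those containing interval copies of `x`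
and `y`, and also those containing other intervals known to force `μ(1, λ) = 0`, such as `12`
together with `21`.
-/

namespace PPerm

variable {ρ σ τ π : PPerm}

theorem Le.refl (π : PPerm) : Le π π := ⟨id, strictMono_id, fun _ _ => Iff.rfl⟩

theorem Le.trans : Le ρ σ → Le σ τ → Le ρ τ
  | ⟨f, hf, hf'⟩, ⟨g, hg, hg'⟩ => ⟨g ∘ f, hg.comp hf, fun a b => (hf' a b).trans (hg' _ _)⟩

theorem Le.length_le (h : Le σ π) : σ.1 ≤ π.1 := by
  obtain ⟨f, hf, -⟩ := h
  simpa using Fintype.card_le_of_injective f hf.injective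

theorem Le.eq_of_length_le (h : Le σ π) (hl : π.1 ≤ σ.1) : σ = π := by
  obtain ⟨n, p⟩ := σ
  obtain ⟨m, q⟩ := π
  obtain rfl : m = n := le_antisymm hl h.length_le
  obtain ⟨f, hf, hpq⟩ := h
  obtain rfl : f = id := (hf.range_inj strictMono_id).1 <| by
    rw [(Finite.surjective_of_injective hf.injective).range_eq, Set.range_id]
  have hmono : StrictMono (p.symm.trans q) := fun a b hab => by
    simpa using (hpq (p.symm a) (p.symm b)).1 (by simpa using hab)
  have hid : ⇑(p.symm.trans q) = id := (hmono.range_inj strictMono_id).1 <| by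
    rw [(Equiv.surjective _).range_eq, Set.range_id]
  congr 1
  ext a
  simpa using congrArg Fin.val (congrFun hid (p a)).symm

theorem Lt.length_lt (h : Lt σ π) : σ.1 < π.1 :=
  lt_of_not_ge fun hl => h.2 (h.1.eq_of_length_le hl)

theorem lt_iff_le_and_length_lt : Lt σ π ↔ Le σ π ∧ σ.1 < π.1 :=
  ⟨fun h => ⟨h.1, h.length_lt⟩, fun h => ⟨h.1, fun he => h.2.ne (congrArg Sigma.fst he)⟩⟩

theorem one_le (h : 0 < π.1) : Le one π := by
  refine ⟨fun _ => ⟨0, h⟩, fun a b hab => ?_, fun a b => ?_⟩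
  · exact absurd hab (Subsingleton.elim (α := Fin 1) a b).not_lt
  · obtain rfl : a = b := Subsingleton.elim (α := Fin 1) a b
    simp only [lt_irrefl]

end PPerm

open PPerm

section MoebiusFunction

variable {σ π : PPerm}

theorem mem_intervalCC {lam : PPerm} : lam ∈ intervalCC σ π ↔ Le σ lam ∧ Le lam π := by
  obtain ⟨m, p⟩ := lam
  simp only [intervalCC, Finset.mem_biUnion, Finset.mem_image, Finset.mem_filter,
    Finset.mem_univ, true_and, Finset.mem_range]
  constructor
  · rintro ⟨_, -, _, h, ⟨⟩⟩
    exact h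
  · exact fun h => ⟨m, Nat.lt_succ_of_le h.2.length_le, p, h, rfl⟩

theorem mem_intervalCO {lam : PPerm} : lam ∈ intervalCO σ π ↔ Le σ lam ∧ Lt lam π := by
  rw [intervalCO, Finset.mem_filter, mem_intervalCC, and_assoc, Lt]

theorem intervalCO_eq_sigma (σ π : PPerm) :
    intervalCO σ π = (Finset.range π.1).sigma fun m =>
      {p : Equiv.Perm (Fin m) | Le σ ⟨m, p⟩ ∧ Le ⟨m, p⟩ π} := by
  ext lam
  simp only [mem_intervalCO, lt_iff_le_and_length_lt, Finset.mem_sigma, Finset.mem_range,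
    Finset.mem_filter, Finset.mem_univ, true_and]
  tauto

theorem muAux_eq_muAux {k l : ℕ} (hk : π.1 < k) (hl : π.1 < l) :
    muAux k σ π = muAux l σ π := by
  induction k generalizing l π with
  | zero => omega
  | succ k ih =>
    obtain _ | l := l
    · omega
    · simp only [muAux]
      congr 3
      refine Finset.sum_congr rfl fun m hm => Finset.sum_congr rfl fun p _ => ?_
      have hm : m < π.1 := Finset.mem_range.1 hm
      exact ih (hm.trans_le (Nat.le_of_lt_succ hk)) (hm.trans_le (Nat.le_of_lt_succ hl))

theorem mu_eq_neg_sum (h : Lt σ π) : mu σ π = -∑ lam ∈ intervalCO σ π, mu σ lam := by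
  rw [mu, muAux, if_neg h.2, if_pos h.1, intervalCO_eq_sigma, Finset.sum_sigma]
  congr! 3 with m hm p
  exact muAux_eq_muAux (Finset.mem_range.1 hm) (Nat.lt_succ_self m)

theorem sum_mu_intervalCC (h : Lt σ π) : ∑ lam ∈ intervalCC σ π, mu σ lam = 0 := by
  rw [← Finset.sum_filter_add_sum_filter_not _ (· ≠ π)]
  have hπ : (intervalCC σ π).filter (¬ · ≠ π) = {π} := by
    ext lam
    simp only [Finset.mem_filter, mem_intervalCC, not_not, Finset.mem_singleton]
    exact ⟨And.right, by rintro rfl; exact ⟨⟨h.1, .refl _⟩, rfl⟩⟩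
  rw [hπ, Finset.sum_singleton, mu_eq_neg_sum h, intervalCO, add_neg_cancel]

theorem mu_eq_zero_of_signed_cover {ι : Type*} (h : Lt σ π) (s : List ι) (c : ι → ℤ)
    (α : ι → PPerm) (hα : ∀ i ∈ s, Lt σ (α i) ∧ Lt (α i) π)
    (hcover : ∀ lam, Le σ lam → Lt lam π → mu σ lam ≠ 0 →
      ((s.filter fun i => Le lam (α i)).map c).sum = 1) :
    mu σ π = 0 := by
  have hsum (t : List ι) (ht : ∀ i ∈ t, Lt σ (α i) ∧ Lt (α i) π) :
      ∑ lam ∈ intervalCO σ π, ((t.filter fun i => Le lam (α i)).map c).sum * mu σ lam = 0 := by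
    induction t with
    | nil => simp
    | cons i t ih =>
      have hi : {lam ∈ intervalCO σ π | Le lam (α i)} = intervalCC σ (α i) := by
        ext lam
        simp only [Finset.mem_filter, mem_intervalCO, mem_intervalCC]
        have := (ht i (by simp)).2
        refine ⟨fun h => ⟨h.1.1, h.2⟩, fun h => ⟨⟨h.1, ?_⟩, h.2⟩⟩
        exact lt_iff_le_and_length_lt.2
          ⟨h.2.trans this.1, h.2.length_le.trans_lt this.length_lt⟩
      calc _ = ∑ lam ∈ intervalCO σ π, ((if Le lam (α i) then c i * mu σ lam else 0) +
            ((t.filter fun i => Le lam (α i)).map c).sum * mu σ lam) := by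
            refine Finset.sum_congr rfl fun lam _ => ?_
            by_cases hl : Le lam (α i) <;> simp [hl, add_mul]
        _ = 0 := by
            rw [Finset.sum_add_distrib, ih fun j hj => ht j (by simp [hj]), ← Finset.sum_filter,
              hi, ← Finset.mul_sum, sum_mu_intervalCC (ht i (by simp)).1, mul_zero, add_zero]
  rw [mu_eq_neg_sum h, neg_eq_zero, ← hsum s hα]
  refine Finset.sum_congr rfl fun lam hlam => ?_
  rw [mem_intervalCO] at hlam
  by_cases hmu : mu σ lam = 0
  · rw [hmu, mul_zero]
  · rw [hcover lam hlam.1 hlam.2 hmu, one_mul]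

end MoebiusFunction

/-- Words stand for sequences of distinct natural numbers; only the relative order of the entries
matters. -/
abbrev Word : Type := List ℕ

/-- The standardization of a word: each entry is replaced by its rank. Two words are order
isomorphic precisely if their standardizations agree. -/
def std (x : Word) : Word := x.map fun a => x.countP (· < a)

/-- The patterns contained in a word, in standardized form. -/
def patterns (w : Word) : List Word := (w.sublists.map std).dedup

/-- The word of a permutation, with 0-indexed values. -/
def word (π : PPerm) : Word := List.ofFn fun i => (π.2 i : ℕ)

section Words

variable {u v w x y s : Word} {a b : ℕ}

theorem length_std (x : Word) : (std x).length = x.length := List.length_map _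

theorem length_eq_of_std_eq (h : std x = std y) : x.length = y.length := by
  rw [← length_std x, h, length_std]

theorem countP_lt_lt_iff (ha : a ∈ x) : x.countP (· < a) < x.countP (· < b) ↔ a < b := by
  constructor
  · contrapose!
    exact fun hba => List.countP_mono_left fun c _ hc => by
      simp only [decide_eq_true_eq] at hc ⊢; exact hc.trans_le hba
  · intro hab
    simp only [List.countP_eq_length_filter]
    have hsub : (x.filter (· < a)).Sublist (x.filter (· < b)) :=
      List.monotone_filter_right x fun c hc => by
        simp only [decide_eq_true_eq] at hc ⊢; exact hc.trans hab
    refine lt_of_le_of_ne hsub.length_le fun hlen => ?_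
    have : a ∈ x.filter (· < a) := by
      rw [hsub.eq_of_length hlen]; simpa using ⟨ha, hab⟩
    simp at this

/- Order isomorphisms are handled through the list `l` of pairs of corresponding entries, which
makes their symmetry and their restriction to subwords evident. -/
theorem std_map_fst_eq_std_map_snd {l : List (ℕ × ℕ)}
    (h : ∀ p ∈ l, ∀ q ∈ l, p.1 < q.1 ↔ p.2 < q.2) :
    std (l.map Prod.fst) = std (l.map Prod.snd) := by
  simp only [std, List.map_map]
  refine List.map_congr_left fun p hp => ?_
  simp only [Function.comp_apply, List.countP_map]
  exact List.countP_congr fun q hq => by simpa using h q hq p hp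

theorem getElem_lt_getElem_iff_of_std_eq (h : std x = std y) {i j : ℕ} (hi : i < x.length)
    (hj : j < x.length) :
    x[i] < x[j] ↔ y[i]'(length_eq_of_std_eq h ▸ hi) < y[j]'(length_eq_of_std_eq h ▸ hj) := by
  have hrank {k : ℕ} (hk : k < x.length) :
      x.countP (· < x[k]) = y.countP (· < y[k]'(length_eq_of_std_eq h ▸ hk)) := by
    simpa only [std, List.getElem_map] using List.getElem_of_eq h (by rwa [length_std])
  rw [← countP_lt_lt_iff (List.getElem_mem hi), hrank, hrank,
    countP_lt_lt_iff (List.getElem_mem _)]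

theorem exists_pairs_of_std_eq (h : std x = std y) :
    ∃ l : List (ℕ × ℕ), l.map Prod.fst = x ∧ l.map Prod.snd = y ∧
      ∀ p ∈ l, ∀ q ∈ l, p.1 < q.1 ↔ p.2 < q.2 := by
  have hlen := length_eq_of_std_eq h
  refine ⟨x.zip y, List.map_fst_zip hlen.le, List.map_snd_zip hlen.ge, fun p hp q hq => ?_⟩
  obtain ⟨i, hi, rfl⟩ := List.getElem_of_mem hp
  obtain ⟨j, hj, rfl⟩ := List.getElem_of_mem hq
  simpa only [List.getElem_zip] using getElem_lt_getElem_iff_of_std_eq h _ _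

theorem std_std (x : Word) : std (std x) = std x := by
  have := std_map_fst_eq_std_map_snd (l := x.map fun a => (x.countP (· < a), a)) <| by
    simp only [List.forall_mem_map]
    exact fun a ha b _ => countP_lt_lt_iff ha
  simpa [std, Function.comp_def] using this

theorem exists_sublist_of_std_eq (h : std x = std y) (hs : s.Sublist x) :
    ∃ t, t.Sublist y ∧ std t = std s := by
  obtain ⟨l, rfl, rfl, hl⟩ := exists_pairs_of_std_eq h
  obtain ⟨k, hk, rfl⟩ := List.sublist_map_iff.1 hs
  exact ⟨k.map Prod.snd, hk.map _,
    (std_map_fst_eq_std_map_snd fun p hp q hq => hl p (hk.subset hp) q (hk.subset hq)).symm⟩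

theorem mem_patterns : u ∈ patterns w ↔ ∃ s, s.Sublist w ∧ std s = u := by
  simp [patterns]

theorem std_mem_patterns (h : s.Sublist w) : std s ∈ patterns w := mem_patterns.2 ⟨s, h, rfl⟩

theorem patterns_subset_of_std_eq (h : std v = std w) : patterns v ⊆ patterns w := by
  simp only [List.subset_def, mem_patterns]
  rintro _ ⟨s, hs, rfl⟩
  exact exists_sublist_of_std_eq h hs

theorem mem_patterns_congr (h : std v = std w) : u ∈ patterns v ↔ u ∈ patterns w :=
  ⟨fun hu => patterns_subset_of_std_eq h hu, fun hu => patterns_subset_of_std_eq h.symm hu⟩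

theorem mem_patterns_std : u ∈ patterns (std w) ↔ u ∈ patterns w := mem_patterns_congr (std_std w)

theorem length_word (π : PPerm) : (word π).length = π.1 := List.length_ofFn

theorem nodup_word (π : PPerm) : (word π).Nodup :=
  List.nodup_ofFn.2 fun _ _ h => π.2.injective (Fin.ext h)

theorem word_eq_map (π : PPerm) : word π = (List.finRange π.1).map fun i => (π.2 i : ℕ) :=
  List.ofFn_eq_map

theorem std_word_eq_iff {n : ℕ} {p : Equiv.Perm (Fin n)} {f : Fin n → ℕ} :
    std (List.ofFn f) = std (word ⟨n, p⟩) ↔ ∀ i j, p i < p j ↔ f i < f j := by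
  constructor
  · intro h i j
    have := getElem_lt_getElem_iff_of_std_eq h (i := i) (j := j) (by simp) (by simp)
    simpa [word] using this.symm
  · intro h
    have := std_map_fst_eq_std_map_snd
      (l := (List.finRange n).map fun i => (f i, (p i : ℕ))) <| by
        simp only [List.forall_mem_map]
        exact fun i _ j _ => (h i j).symm
    simpa only [List.map_map, word, List.ofFn_eq_map, Function.comp_def] using this

theorem PPerm.le_iff_std_word_mem_patterns {σ π : PPerm} :
    Le σ π ↔ std (word σ) ∈ patterns (word π) := by
  rw [mem_patterns]
  constructor
  · rintro ⟨f, hf, hσπ⟩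
    refine ⟨List.ofFn fun i => (π.2 (f i) : ℕ), ?_, std_word_eq_iff.2 hσπ⟩
    rw [List.ofFn_eq_map, ← Function.comp_def (fun i => (π.2 i : ℕ)) f, ← List.map_map,
      word_eq_map]
    have hlt := (List.pairwise_lt_finRange σ.1).map f fun _ _ h => hf h
    refine .map _ <| List.sublist_of_subperm_of_pairwise
      (List.subperm_of_subset hlt.nodup fun i _ => List.mem_finRange i)
      (hlt.imp le_of_lt) ((List.pairwise_lt_finRange π.1).imp le_of_lt)
  · rintro ⟨s, hs, hstd⟩
    rw [word_eq_map] at hs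
    obtain ⟨k, hk, rfl⟩ := List.sublist_map_iff.1 hs
    have hlen : k.length = σ.1 := by
      simpa only [List.length_map, length_word] using length_eq_of_std_eq hstd
    obtain ⟨n, p⟩ := σ
    obtain rfl : k.length = n := hlen
    refine ⟨k.get, fun i j hij => ?_, std_word_eq_iff.1 ?_⟩
    · exact ((List.pairwise_lt_finRange _).sublist hk).rel_get_of_lt hij
    · rw [← hstd, ← Function.comp_def (fun i => (π.2 i : ℕ)) k.get, ← List.map_ofFn,
        List.ofFn_get]

theorem exists_std_word_eq (hs : s.Nodup) : ∃ ρ : PPerm, std (word ρ) = std s := by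
  have hlt (i : Fin s.length) : s.countP (· < s.get i) < s.length :=
    List.countP_lt_length_iff.2 ⟨s.get i, s.get_mem i, by simp⟩
  let f (i : Fin s.length) : Fin s.length := ⟨s.countP (· < s.get i), hlt i⟩
  have hf (i j) : f i < f j ↔ s.get i < s.get j := countP_lt_lt_iff (s.get_mem i)
  have hinj : Function.Injective f := fun i j hij => by
    refine hs.injective_get (le_antisymm ?_ ?_) <;>
      exact not_lt.1 fun hlt => ((hf _ _).2 hlt).ne (by rw [hij])
  refine ⟨⟨_, Equiv.ofBijective f (Finite.injective_iff_bijective.1 hinj)⟩, ?_⟩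
  rw [← std_word_eq_iff.2 fun i j => hf i j, List.ofFn_get]

end Words

/-- `y` is an interval of the word `w`: a factor such that no other entry of `w` lies between two
entries of `y`. -/
def IsInterval (w y : Word) : Prop :=
  y <:+: w ∧ ∀ c ∈ w, c ∉ y → (∀ d ∈ y, c < d) ∨ ∀ d ∈ y, d < c

/-- The words having an interval copy in `w`, in standardized form. -/
def intervals (w : Word) : List Word :=
  ((w.tails.flatMap List.inits).filter fun y =>
    ∀ c ∈ w, c ∉ y → (∀ d ∈ y, c < d) ∨ ∀ d ∈ y, d < c).map std

section Intervals

variable {u v w x y z s e p q : Word}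

theorem mem_intervals : u ∈ intervals w ↔ ∃ y, IsInterval w y ∧ std y = u := by
  simp [intervals, IsInterval, List.infix_iff_prefix_suffix, and_comm]

theorem isInterval_nil (w : Word) : IsInterval w [] :=
  ⟨List.nil_infix, fun _ _ _ => .inl <| by simp⟩

theorem IsInterval.trans (hz : IsInterval y z) (hy : IsInterval w y) : IsInterval w z := by
  refine ⟨hz.1.trans hy.1, fun c hc hcz => ?_⟩
  by_cases hcy : c ∈ y
  · exact hz.2 c hcy hcz
  · exact (hy.2 c hc hcy).imp (fun h d hd => h d (hz.1.subset hd)) fun h d hd =>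
      h d (hz.1.subset hd)

theorem IsInterval.of_infix (hy : IsInterval w y) (hyx : y <:+: x) (hx : x ⊆ w) : IsInterval x y :=
  ⟨hyx, fun c hc => hy.2 c (hx hc)⟩

theorem exists_isInterval_of_std_eq (h : std v = std w) (hy : IsInterval v y) :
    ∃ z, IsInterval w z ∧ std z = std y := by
  obtain ⟨l, rfl, rfl, hl⟩ := exists_pairs_of_std_eq h
  obtain ⟨⟨p, q, hpq⟩, hy⟩ := hy
  obtain ⟨l', lq, rfl, hl', rfl⟩ := List.map_eq_append_iff.1 hpq.symm
  obtain ⟨lp, ly, rfl, rfl, rfl⟩ := List.map_eq_append_iff.1 hl'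
  refine ⟨ly.map Prod.snd, ⟨⟨lp.map Prod.snd, lq.map Prod.snd, by simp⟩, ?_⟩,
    (std_map_fst_eq_std_map_snd fun p hp q hq => hl p (by simp [hp]) q (by simp [hq])).symm⟩
  have hmem {p} (hp : p ∈ ly) : p ∈ lp ++ ly ++ lq := by simp [hp]
  simp only [List.forall_mem_map] at hy ⊢
  intro p hp hpy
  by_cases hpy' : p.1 ∈ ly.map Prod.fst
  · obtain ⟨q, hq, hqp⟩ := List.mem_map.1 hpy'
    have : q.2 = p.2 := by
      have := hl p hp q (hmem hq); have := hl q (hmem hq) p hp; omega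
    exact absurd (this ▸ List.mem_map_of_mem hq) hpy
  · exact (hy p hp hpy').imp (fun h q hq => (hl p hp q (hmem hq)).1 (h q hq))
      fun h q hq => (hl q (hmem hq) p hp).1 (h q hq)

theorem intervals_subset_of_std_eq (h : std v = std w) : intervals v ⊆ intervals w := by
  simp only [List.subset_def, mem_intervals]
  rintro _ ⟨y, hy, rfl⟩
  exact exists_isInterval_of_std_eq h hy

theorem IsInterval.intervals_subset (h : IsInterval w y) : intervals (std y) ⊆ intervals w := by
  refine fun u hu => ?_
  obtain ⟨z, hz, rfl⟩ := mem_intervals.1 (intervals_subset_of_std_eq (std_std y) hu)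
  exact mem_intervals.2 ⟨z, hz.trans h, rfl⟩

theorem filter_mem_eq_of_sublist (hw : w.Nodup) (h : s.Sublist w) : w.filter (· ∈ s) = s := by
  refine (List.Sublist.eq_of_length_le ?_ ?_).symm
  · exact List.sublist_filter_iff.2 ⟨s, h, (List.filter_eq_self.2 fun c hc => by simpa).symm⟩
  · exact ((hw.filter _).subperm fun c hc => by
      simpa using (List.mem_filter.1 hc).2).length_le

theorem exists_append_filter_mem (hw : w.Nodup) (hy : y <:+: w) (hs : s.Sublist w) :
    ∃ p q : Word, (∀ c ∈ p ++ q, c ∉ y) ∧ s = p ++ s.filter (· ∈ y) ++ q ∧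
      ∀ e : Word, e.Sublist y → (p ++ e ++ q).Sublist w := by
  obtain ⟨p, q, rfl⟩ := hy
  obtain ⟨s', q', rfl, hs', hq'⟩ := List.sublist_append_iff.1 hs
  obtain ⟨p', y', rfl, hp', hy'⟩ := List.sublist_append_iff.1 hs'
  have hpq : ∀ c ∈ p' ++ q', c ∉ y := by
    simp only [List.nodup_append', List.mem_append] at hw ⊢
    rintro c (hc | hc)
    · exact fun hcy => hw.1.2.2 (hp'.subset hc) hcy
    · exact fun hcy => hw.2.2 (List.mem_append_right _ hcy) (hq'.subset hc)
  refine ⟨p', q', hpq, ?_, fun e he => (hp'.append he).append hq'⟩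
  have hp0 : p'.filter (· ∈ y) = [] := by
    simpa using fun c hc => hpq c (List.mem_append_left _ hc)
  have hq0 : q'.filter (· ∈ y) = [] := by
    simpa using fun c hc => hpq c (List.mem_append_right _ hc)
  have hy0 : y'.filter (· ∈ y) = y' := by simpa using fun c hc => hy'.subset hc
  simp only [List.filter_append, hp0, hq0, hy0, List.nil_append, List.append_nil]

theorem IsInterval.filter_mem (h : IsInterval w y) (hw : w.Nodup) (hs : s.Sublist w) :
    IsInterval s (s.filter (· ∈ y)) := by
  obtain ⟨p, q, -, hpq, -⟩ := exists_append_filter_mem hw h.1 hs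
  refine ⟨⟨p, q, hpq.symm⟩, fun c hc hcy => ?_⟩
  have hcy : c ∉ y := fun h => hcy (by simpa using ⟨hc, h⟩)
  exact (h.2 c (hs.subset hc) hcy).imp (fun h d hd => h d (by simpa using (List.mem_filter.1 hd).2))
    fun h d hd => h d (by simpa using (List.mem_filter.1 hd).2)

theorem std_append_append_congr (h : ∀ c ∈ p ++ q, (∀ d ∈ y, c < d) ∨ ∀ d ∈ y, d < c)
    (hx : ∀ c ∈ x, c ∈ y) (hz : ∀ c ∈ z, c ∈ y) (hxz : std x = std z) :
    std (p ++ x ++ q) = std (p ++ z ++ q) := by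
  obtain ⟨l, rfl, rfl, hl⟩ := exists_pairs_of_std_eq hxz
  have hlow (c) (hc : c ∈ p ++ q) (r) (hr : r ∈ l) : c < r.1 ↔ c < r.2 := by
    have h1 := hx _ (List.mem_map_of_mem hr)
    have h2 := hz _ (List.mem_map_of_mem hr)
    rcases h c hc with h | h
    · exact iff_of_true (h _ h1) (h _ h2)
    · exact iff_of_false (h _ h1).asymm (h _ h2).asymm
  have hupp (c) (hc : c ∈ p ++ q) (r) (hr : r ∈ l) : r.1 < c ↔ r.2 < c := by
    have h1 := hx _ (List.mem_map_of_mem hr)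
    have h2 := hz _ (List.mem_map_of_mem hr)
    rcases h c hc with h | h
    · exact iff_of_false (h _ h1).asymm (h _ h2).asymm
    · exact iff_of_true (h _ h1) (h _ h2)
  simp only [List.forall_mem_append] at hlow hupp
  have := std_map_fst_eq_std_map_snd
    (l := p.map (fun c => (c, c)) ++ l ++ q.map fun c => (c, c)) <| by
      simp only [List.forall_mem_append, List.forall_mem_map]
      refine ⟨⟨fun c hc => ⟨⟨?_, ?_⟩, ?_⟩, fun r hr => ⟨⟨?_, ?_⟩, ?_⟩⟩, fun c hc => ⟨⟨?_, ?_⟩, ?_⟩⟩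
      all_goals grind
  simpa [Function.comp_def] using this

theorem IsInterval.exists_replacement (h : IsInterval w y) (hw : w.Nodup) (hs : s.Sublist w)
    (he : e.Sublist y) (hstd : std e = std (s.filter (· ∈ y))) :
    ∃ t, t.Sublist w ∧ std t = std s ∧ t.filter (· ∈ y) = e ∧
      t.filter (· ∉ y) = s.filter (· ∉ y) := by
  obtain ⟨p, q, hpq, hspq, hsub⟩ := exists_append_filter_mem hw h.1 hs
  have hout : ∀ c ∈ p ++ q, (∀ d ∈ y, c < d) ∨ ∀ d ∈ y, d < c := fun c hc =>
    h.2 c (hs.subset (by rw [hspq]; grind)) (hpq c hc)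
  have hfilter {f : Word} (hf : ∀ c ∈ f, c ∈ y) :
      (p ++ f ++ q).filter (· ∈ y) = f ∧ (p ++ f ++ q).filter (· ∉ y) = p ++ q := by
    simp only [List.forall_mem_append] at hpq
    have hin {z : Word} (hz : ∀ c ∈ z, c ∉ y) : z.filter (· ∈ y) = [] ∧ z.filter (· ∉ y) = z := by
      simpa using hz
    have hfin : f.filter (· ∈ y) = f ∧ f.filter (· ∉ y) = [] := by simpa using hf
    simp only [List.filter_append, hin hpq.1, hin hpq.2, hfin, List.nil_append,
      List.append_nil, and_self]
  have hsy : ∀ c ∈ s.filter (· ∈ y), c ∈ y := fun c hc => by simpa using (List.mem_filter.1 hc).2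
  refine ⟨p ++ e ++ q, hsub e he, ?_, (hfilter he.subset).1, ?_⟩
  · have hey : ∀ c ∈ e, c ∈ y := he.subset
    rw [hspq]
    generalize s.filter (· ∈ y) = f at hstd hsy
    exact std_append_append_congr hout hey hsy hstd
  · conv_rhs => rw [hspq]
    rw [(hfilter he.subset).2, (hfilter hsy).2]

end Intervals

/-- The subword of `w` obtained by shrinking its factors `x` and `y` to their subwords `a` and
`b`. -/
def shrink (w x y a b : Word) : Word := w.filter fun c => (c ∈ x → c ∈ a) ∧ (c ∈ y → c ∈ b)

/-- Some occurrence of the pattern `u` in `w` meets `x` in the pattern `t.1` and `y` in the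
pattern `t.2`. -/
def HasTrace (w x y u : Word) (t : Word × Word) : Prop :=
  ∃ s, s.Sublist w ∧ std (s.filter (· ∈ x)) = t.1 ∧ std (s.filter (· ∈ y)) = t.2 ∧ std s = u

section Traces

variable {u w x y s a b : Word} {t : Word × Word}

theorem exists_hasTrace (x y : Word) (h : u ∈ patterns w) : ∃ t, HasTrace w x y u t := by
  obtain ⟨s, hs, rfl⟩ := mem_patterns.1 h
  exact ⟨(_, _), s, hs, rfl, rfl, rfl⟩

theorem filter_mem_sublist (hw : w.Nodup) (hs : s.Sublist w) (hx : x.Sublist w) :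
    (s.filter (· ∈ x)).Sublist x := by
  simpa only [filter_mem_eq_of_sublist hw hx] using hs.filter (· ∈ x)

theorem HasTrace.mem_patterns (h : HasTrace w x y u t) (hw : w.Nodup) (hx : x.Sublist w)
    (hy : y.Sublist w) : t.1 ∈ patterns x ∧ t.2 ∈ patterns y := by
  obtain ⟨s, hs, hsx, hsy, -⟩ := h
  rw [← hsx, ← hsy]
  exact ⟨std_mem_patterns (filter_mem_sublist hw hs hx),
    std_mem_patterns (filter_mem_sublist hw hs hy)⟩

theorem HasTrace.intervals_subset (h : HasTrace w x y u t) (hw : w.Nodup) (hx : IsInterval w x)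
    (hy : IsInterval w y) : intervals t.1 ⊆ intervals u ∧ intervals t.2 ⊆ intervals u := by
  obtain ⟨s, hs, hsx, hsy, rfl⟩ := h
  have hsub {z : Word} (hz : IsInterval w z) :
      intervals (std (s.filter (· ∈ z))) ⊆ intervals (std s) := fun v hv =>
    intervals_subset_of_std_eq (std_std s).symm ((hz.filter_mem hw hs).intervals_subset hv)
  exact ⟨hsx ▸ hsub hx, hsy ▸ hsub hy⟩

theorem filter_filter_not_mem (hxy : x.Disjoint y) :
    (s.filter (· ∉ x)).filter (· ∈ y) = s.filter (· ∈ y) := by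
  rw [List.filter_filter]
  refine List.filter_congr fun c _ => ?_
  have := @hxy c
  grind

theorem mem_patterns_shrink_iff (hw : w.Nodup) (hx : IsInterval w x) (hy : IsInterval w y)
    (hxy : x.Disjoint y) (ha : a.Sublist x) (hb : b.Sublist y) :
    u ∈ patterns (shrink w x y a b) ↔
      ∃ t, HasTrace w x y u t ∧ t.1 ∈ patterns a ∧ t.2 ∈ patterns b := by
  rw [mem_patterns]
  constructor
  · rintro ⟨s, hs, rfl⟩
    have hsw : s.Sublist w := hs.trans List.filter_sublist
    refine ⟨(_, _), ⟨s, hsw, rfl, rfl, rfl⟩, ?_⟩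
    have hmem : ∀ c ∈ s, (c ∈ x → c ∈ a) ∧ (c ∈ y → c ∈ b) := fun c hc =>
      of_decide_eq_true (List.mem_filter.1 (hs.subset hc)).2
    have hsub {z e : Word} (he : e.Sublist w) (hze : ∀ c ∈ s, c ∈ z → c ∈ e) :
        (s.filter (· ∈ z)).Sublist e := by
      rw [← filter_mem_eq_of_sublist hw he]
      refine List.sublist_filter_iff.2 ⟨s.filter (· ∈ z), List.filter_sublist.trans hsw, ?_⟩
      exact (List.filter_eq_self.2 fun c hc => by simp_all).symm
    exact ⟨std_mem_patterns (hsub (ha.trans hx.1.sublist) fun c hc => (hmem c hc).1),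
      std_mem_patterns (hsub (hb.trans hy.1.sublist) fun c hc => (hmem c hc).2)⟩
  · rintro ⟨t, ⟨s, hs, hsx, hsy, rfl⟩, hta, htb⟩
    obtain ⟨e, hea, hex⟩ := mem_patterns.1 hta
    obtain ⟨f, hfb, hfy⟩ := mem_patterns.1 htb
    obtain ⟨s₁, hs₁, hstd₁, hin₁, hout₁⟩ :=
      hx.exists_replacement hw hs (hea.trans ha) (hex.trans hsx.symm)
    have hs₁y : s₁.filter (· ∈ y) = s.filter (· ∈ y) := by
      rw [← filter_filter_not_mem hxy, hout₁, filter_filter_not_mem hxy]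
    obtain ⟨s₂, hs₂, hstd₂, hin₂, hout₂⟩ :=
      hy.exists_replacement hw hs₁ (hfb.trans hb) (by rw [hfy, hs₁y, hsy])
    have hs₂x : s₂.filter (· ∈ x) = e := by
      rw [← hin₁, ← filter_filter_not_mem hxy.symm, hout₂, filter_filter_not_mem hxy.symm]
    refine ⟨s₂, List.sublist_filter_iff.2 ⟨s₂, hs₂, (List.filter_eq_self.2 fun c hc => ?_).symm⟩,
      hstd₂.trans hstd₁⟩
    have hcx (h : c ∈ x) : c ∈ a :=
      hea.subset (hs₂x ▸ List.mem_filter.2 ⟨hc, decide_eq_true h⟩)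
    have hcy (h : c ∈ y) : c ∈ b :=
      hfb.subset (hin₂ ▸ List.mem_filter.2 ⟨hc, decide_eq_true h⟩)
    exact decide_eq_true ⟨hcx, hcy⟩

theorem length_shrink_lt (hw : w.Nodup) (hx : IsInterval w x) (hy : IsInterval w y)
    (hlt : a.length + b.length < x.length + y.length) : (shrink w x y a b).length < w.length := by
  refine lt_of_le_of_ne List.filter_sublist.length_le fun hlen => ?_
  have hmem := List.length_filter_eq_length_iff.1 hlen
  have hle {z e : Word} (hz : IsInterval w z) (hze : ∀ c ∈ w, c ∈ z → c ∈ e) :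
      z.length ≤ e.length :=
    ((hw.sublist hz.1.sublist).subperm fun c hc => hze c (hz.1.subset hc) hc).length_le
  simp only [decide_eq_true_eq] at hmem
  have := hle hx fun c hc => (hmem c hc).1
  have := hle hy fun c hc => (hmem c hc).2
  omega

theorem length_add_length_le_length_shrink (hw : w.Nodup) (hx : IsInterval w x)
    (hy : IsInterval w y) (hxy : x.Disjoint y) (ha : a.Sublist x) (hb : b.Sublist y) :
    a.length + b.length ≤ (shrink w x y a b).length := by
  have hab : (a ++ b).Nodup :=
    ((hw.sublist hx.1.sublist).append (hw.sublist hy.1.sublist) hxy).sublist (ha.append hb)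
  rw [← List.length_append]
  refine (hab.subperm fun c hc => ?_).length_le
  have hax := ha.subset
  have hby := hb.subset
  have hxw := hx.1.subset
  have hyw := hy.1.subset
  rw [shrink, List.mem_filter, decide_eq_true_eq]
  rcases List.mem_append.1 hc with hc | hc
  · exact ⟨hxw (hax hc), fun _ => hc, fun hcy => (hxy (hax hc) hcy).elim⟩
  · exact ⟨hyw (hby hc), fun hcx => (hxy hcx (hby hc)).elim, fun _ => hc⟩

end Traces

/-- A word is sum decomposable if it splits into two nonempty factors, the first of which has
smaller entries than the second. -/
def IsSumDecomposable (x : Word) : Prop :=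
  ∃ i < x.length, 0 < i ∧ ∀ a ∈ x.take i, ∀ b ∈ x.drop i, a < b

/-- A condition on patterns `x` and `y` under which an interval copy of `x` and one of `y` never
meet: neither pattern is an interval of the other, and they are not both sum decomposable, nor
both skew decomposable. -/
def Apart (x y : Word) : Prop :=
  y = [] ∨ x ∉ intervals y ∧ y ∉ intervals x ∧ ¬(IsSumDecomposable x ∧ IsSumDecomposable y) ∧
    ¬(IsSumDecomposable x.reverse ∧ IsSumDecomposable y.reverse)

instance (x y : Word) : Decidable (Apart x y) := by
  unfold Apart IsSumDecomposable
  infer_instance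

section Disjointness

variable {w x y s t e p q : Word}

theorem isSumDecomposable_append (hs : s ≠ []) (ht : t ≠ []) (h : ∀ a ∈ s, ∀ b ∈ t, a < b) :
    IsSumDecomposable (s ++ t) := by
  have := List.length_pos_of_ne_nil ht
  exact ⟨s.length, by simpa, List.length_pos_of_ne_nil hs, by simpa⟩

theorem IsSumDecomposable.of_std_eq (h : IsSumDecomposable x) (hxy : std x = std y) :
    IsSumDecomposable y := by
  obtain ⟨l, rfl, rfl, hl⟩ := exists_pairs_of_std_eq hxy
  obtain ⟨i, hi, hi0, h⟩ := h
  simp only [List.length_map, ← List.map_take, ← List.map_drop, List.forall_mem_map] at hi h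
  refine ⟨i, by simpa, hi0, ?_⟩
  simp only [← List.map_take, ← List.map_drop, List.forall_mem_map]
  exact fun p hp q hq =>
    (hl p (List.mem_of_mem_take hp) q (List.mem_of_mem_drop hq)).1 (h p hp q hq)

theorem std_reverse (x : Word) : std x.reverse = (std x).reverse := by
  simp only [std, List.countP_reverse, List.map_reverse]

theorem IsInterval.reverse (h : IsInterval w y) : IsInterval w.reverse y.reverse :=
  ⟨List.reverse_infix.2 h.1, by simpa only [List.mem_reverse] using h.2⟩

theorem isSumDecomposable_of_overlap (hw : w.Nodup) (hx : IsInterval w (s ++ t))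
    (hy : IsInterval w (t ++ e)) (hse : s.Disjoint e) (ht : t ≠ []) {a c : ℕ} (ha : a ∈ s)
    (hc : c ∈ e) (hac : a < c) : IsSumDecomposable (s ++ t) ∧ IsSumDecomposable (t ++ e) := by
  have hst := List.disjoint_of_nodup_append (hw.sublist hx.1.sublist)
  have hte := List.disjoint_of_nodup_append (hw.sublist hy.1.sublist)
  have hs (b) (hb : b ∈ s) : (∀ d ∈ t ++ e, b < d) ∨ ∀ d ∈ t ++ e, d < b :=
    hy.2 b (hx.1.subset (List.mem_append_left _ hb)) fun h =>
      (List.mem_append.1 h).elim (hst hb) (hse hb)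
  have he (b) (hb : b ∈ e) : (∀ d ∈ s ++ t, b < d) ∨ ∀ d ∈ s ++ t, d < b :=
    hx.2 b (hy.1.subset (List.mem_append_right _ hb)) fun h =>
      (List.mem_append.1 h).elim (fun h => hse h hb) (fun h => hte h hb)
  simp only [List.mem_append] at hs he
  have hsc (b) (hb : b ∈ s) : b < c :=
    ((he c hc).resolve_left fun h => (h a (.inl ha)).asymm hac) b (.inl hb)
  have hae (d) (hd : d ∈ e) : a < d :=
    ((hs a ha).resolve_right fun h => (h c (.inr hc)).asymm hac) d (.inr hd)
  refine ⟨isSumDecomposable_append (List.ne_nil_of_mem ha) ht fun b hb d hd => ?_,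
    isSumDecomposable_append ht (List.ne_nil_of_mem hc) fun b hb d hd => ?_⟩
  · exact (hs b hb).resolve_right (fun h => (h c (.inr hc)).asymm (hsc b hb)) d (.inl hd)
  · exact (he d hd).resolve_left (fun h => (h a (.inl ha)).asymm (hae d hd)) b (.inr hb)

theorem infix_or_overlap_of_append_eq (h : x ++ p = s ++ (y ++ q)) (hd : (x ++ p).Nodup)
    (hxy : ¬x.Disjoint y) :
    x <:+: y ∨ y <:+: x ∨
      ∃ t e, s ≠ [] ∧ t ≠ [] ∧ e ≠ [] ∧ s.Disjoint e ∧ x = s ++ t ∧ y = t ++ e := by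
  rcases List.append_eq_append_iff.1 h with ⟨m, rfl, hp⟩ | ⟨t, rfl, ht⟩
  · refine absurd (fun c hcx hcy => ?_) hxy
    exact List.disjoint_of_nodup_append hd hcx (by simp [hp, hcy])
  rcases List.append_eq_append_iff.1 ht with ⟨m, rfl, -⟩ | ⟨e, rfl, rfl⟩
  · exact .inr <| .inl <| ⟨s, m, by simp⟩
  have hse : s.Disjoint e := by
    have := List.disjoint_of_nodup_append (List.append_assoc s t _ ▸ hd)
    exact fun c hs he => this hs (by simp [he])
  by_cases hs : s = []
  · exact .inl ⟨[], e, by simp [hs]⟩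
  by_cases he : e = []
  · exact .inr <| .inl ⟨s, [], by simp [he]⟩
  by_cases ht : t = []
  · subst ht
    exact absurd (by simpa using hse) hxy
  exact .inr <| .inr ⟨t, e, hs, ht, he, hse, rfl, rfl⟩

theorem infix_or_overlap (hw : w.Nodup) (hx : x <:+: w) (hy : y <:+: w) (hxy : ¬x.Disjoint y) :
    x <:+: y ∨ y <:+: x ∨
      (∃ s t e, s ≠ [] ∧ t ≠ [] ∧ e ≠ [] ∧ s.Disjoint e ∧ x = s ++ t ∧ y = t ++ e) ∨
      ∃ s t e, s ≠ [] ∧ t ≠ [] ∧ e ≠ [] ∧ s.Disjoint e ∧ y = s ++ t ∧ x = t ++ e := by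
  obtain ⟨p, q, rfl⟩ := hx
  obtain ⟨p', q', hpq⟩ := hy
  simp only [List.append_assoc] at hpq hw
  rcases List.append_eq_append_iff.1 hpq with ⟨s, rfl, h⟩ | ⟨s, rfl, h⟩
  · have hd : (y ++ q').Nodup := by
      rw [← hpq] at hw
      exact hw.sublist (List.sublist_append_right _ _)
    rcases infix_or_overlap_of_append_eq h hd (mt List.Disjoint.symm hxy) with h | h | h
    · exact .inr <| .inl h
    · exact .inl h
    · exact .inr <| .inr <| .inr ⟨s, h⟩
  · have hd : (x ++ q).Nodup := hw.sublist (List.sublist_append_right _ _)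
    rcases infix_or_overlap_of_append_eq h hd hxy with h | h | h
    · exact .inl h
    · exact .inr <| .inl h
    · exact .inr <| .inr <| .inl ⟨s, h⟩

theorem isSumDecomposable_or_reverse_of_overlap (hw : w.Nodup) (hx : IsInterval w x)
    (hy : IsInterval w y)
    (h : ∃ s t e, s ≠ [] ∧ t ≠ [] ∧ e ≠ [] ∧ s.Disjoint e ∧ x = s ++ t ∧ y = t ++ e) :
    IsSumDecomposable x ∧ IsSumDecomposable y ∨
      IsSumDecomposable x.reverse ∧ IsSumDecomposable y.reverse := by
  obtain ⟨s, t, e, hs, ht, he, hse, rfl, rfl⟩ := h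
  obtain ⟨a, ha⟩ := List.exists_mem_of_ne_nil s hs
  obtain ⟨c, hc⟩ := List.exists_mem_of_ne_nil e he
  rcases lt_or_gt_of_ne (fun h => hse ha (h ▸ hc) : a ≠ c) with hac | hca
  · exact .inl <| isSumDecomposable_of_overlap hw hx hy hse ht ha hc hac
  · have hxr := hx.reverse
    have hyr := hy.reverse
    rw [List.reverse_append] at hxr hyr ⊢
    rw [List.reverse_append]
    exact .inr (isSumDecomposable_of_overlap (List.nodup_reverse.2 hw) hyr hxr
      (by simpa using hse.symm) (by simpa) (by simpa) (by simpa) hca).symm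

theorem IsInterval.disjoint_of_apart (hw : w.Nodup) (hx : IsInterval w x) (hy : IsInterval w y)
    (h : Apart (std x) (std y)) : x.Disjoint y := by
  by_contra hxy
  rcases h with h | ⟨hnxy, hnyx, hsum, hskew⟩
  · obtain rfl : y = [] := by simpa [std] using h
    exact hxy (List.disjoint_nil_right x)
  have hmem {y z : Word} (hy : IsInterval w y) (hz : IsInterval w z) (h : z <:+: y) :
      std z ∈ intervals (std y) :=
    intervals_subset_of_std_eq (std_std y).symm <|
      mem_intervals.2 ⟨z, hz.of_infix h hy.1.subset, rfl⟩
  have hstd (z : Word) : IsSumDecomposable z → IsSumDecomposable (std z) := fun h =>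
    h.of_std_eq (std_std z).symm
  have hrev (z : Word) : IsSumDecomposable z.reverse → IsSumDecomposable (std z).reverse :=
    fun h => std_reverse z ▸ hstd _ h
  rcases infix_or_overlap hw hx.1 hy.1 hxy with h | h | h | h
  · exact hnxy (hmem hy hx h)
  · exact hnyx (hmem hx hy h)
  · exact (isSumDecomposable_or_reverse_of_overlap hw hx hy h).elim
      (fun h => hsum (h.imp (hstd x) (hstd y))) fun h => hskew (h.imp (hrev x) (hrev y))
  · exact (isSumDecomposable_or_reverse_of_overlap hw hy hx h).elim
      (fun h => hsum (h.symm.imp (hstd x) (hstd y))) fun h => hskew (h.symm.imp (hrev x) (hrev y))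

end Disjointness

/-- `φ` annihilates if the principal Möbius function vanishes on every permutation containing
interval copies of both components of `φ`. An empty second component imposes no condition. -/
def Annihilates (φ : Word × Word) : Prop :=
  ∀ π : PPerm, φ.1 ∈ intervals (word π) → φ.2 ∈ intervals (word π) → mu one π = 0

/-- A member of a signed cover. In a permutation with disjoint interval copies of `x` and `y`, it
stands for the permutation obtained by shrinking these copies to the patterns `fst` and `snd`,
counted with multiplicity `weight`. -/
structure Core where
  /-- The multiplicity in the cover. -/
  weight : ℤ
  /-- The pattern replacing the copy of `x`. -/
  fst : Word
  /-- The pattern replacing the copy of `y`. -/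
  snd : Word
deriving DecidableEq

/-- An occurrence with trace `t` can be moved into the shrunken permutation described by `k`. -/
abbrev Core.Admits (k : Core) (t : Word × Word) : Prop :=
  t.1 ∈ patterns k.fst ∧ t.2 ∈ patterns k.snd

/-- The members of the cover `K` admitting a given trace. -/
def signature (K : List Core) (t : Word × Word) : List Core := K.filter (Core.Admits · t)

/-- The components of members of `F` that are intervals of one of the two parts of the trace
`t`. -/
def shadow (F : List (Word × Word)) (t : Word × Word) : List Word :=
  ((F.flatMap fun f => [f.1, f.2]).dedup).filter fun u => u ∈ intervals t.1 ∨ u ∈ intervals t.2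

/-- The pairs of a signature and a shadow realized by traces on `x` and `y`. -/
def profiles (F : List (Word × Word)) (x y : Word) (K : List Core) :
    List (List Core × List Word) :=
  ((patterns x ×ˢ patterns y).map fun t => (signature K t, shadow F t)).dedup

/-- The pairs of signatures that may belong to two occurrences of the same pattern, given that this
pattern does not contain both components of a member of `F` as intervals. -/
def signaturePairs (F : List (Word × Word)) (x y : Word) (K : List Core) :
    List (List Core × List Core) :=
  (((profiles F x y K ×ˢ profiles F x y K).filter fun p =>
    ∀ f ∈ F, ¬(f.1 ∈ p.1.2 ++ p.2.2 ∧ f.2 ∈ p.1.2 ++ p.2.2)).map fun p => (p.1.1, p.2.1)).dedup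

/-- `K` is a signed cover: each pattern on which the Möbius function is not known to vanish through
`F` lies below members of `K` of total weight `1`. The members above a pattern form a nonempty union
of signatures, any two of which are compatible; this is the only information about the pattern that
is used, which makes the condition decidable. -/
def IsSignedCover (F : List (Word × Word)) (x y : Word) (K : List Core) : Prop :=
  (∀ p ∈ signaturePairs F x y K, p.1 ≠ []) ∧
  ∀ U ∈ K.sublists, U ≠ [] →
    (∀ i ∈ U, ∀ j ∈ U, ∃ p ∈ signaturePairs F x y K, i ∈ p.1 ∧ p.1 ⊆ U ∧ j ∈ p.2 ∧ p.2 ⊆ U) →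
    (U.map Core.weight).sum = 1

/-- There are members of `K`, and all of them are proper, nontrivial shrinkings of `x` and `y`. -/
def IsProper (x y : Word) (K : List Core) : Prop :=
  K ≠ [] ∧ ∀ k ∈ K, k.fst ∈ patterns x ∧ k.snd ∈ patterns y ∧
    2 ≤ k.fst.length + k.snd.length ∧ k.fst.length + k.snd.length < x.length + y.length

/-- A finite certificate for `Annihilates (x, y)`, given that the members of `F` annihilate. The
pair `(x, y)` itself may be used on shorter permutations. -/
def Certificate (F : List (Word × Word)) (x y : Word) (K : List Core) : Prop :=
  Apart x y ∧ IsProper x y K ∧ IsSignedCover ((x, y) :: F) x y K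

instance (x y : Word) (K : List Core) : Decidable (IsProper x y K) := by
  unfold IsProper
  infer_instance

instance (F : List (Word × Word)) (x y : Word) (K : List Core) :
    Decidable (IsSignedCover F x y K) := by
  unfold IsSignedCover
  infer_instance

instance (F : List (Word × Word)) (x y : Word) (K : List Core) :
    Decidable (Certificate F x y K) := by
  unfold Certificate
  infer_instance

section Certificates

variable {F : List (Word × Word)} {K : List Core} {u w x y : Word} {t t' : Word × Word}

theorem HasTrace.mem_profiles (h : HasTrace w x y u t) (hw : w.Nodup) (hx : IsInterval w x)
    (hy : IsInterval w y) (F : List (Word × Word)) (K : List Core) :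
    (signature K t, shadow F t) ∈ profiles F (std x) (std y) K := by
  have := h.mem_patterns hw hx.1.sublist hy.1.sublist
  rw [profiles, List.mem_dedup]
  exact List.mem_map_of_mem (List.pair_mem_product.2
    ⟨mem_patterns_std.2 this.1, mem_patterns_std.2 this.2⟩)

theorem HasTrace.mem_signaturePairs (ht : HasTrace w x y u t) (ht' : HasTrace w x y u t')
    (hw : w.Nodup) (hx : IsInterval w x) (hy : IsInterval w y)
    (hF : ∀ f ∈ F, ¬(f.1 ∈ intervals u ∧ f.2 ∈ intervals u)) (K : List Core) :
    (signature K t, signature K t') ∈ signaturePairs F (std x) (std y) K := by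
  have hshadow {t} (ht : HasTrace w x y u t) : shadow F t ⊆ intervals u := fun v hv => by
    have := ht.intervals_subset hw hx hy
    exact (of_decide_eq_true (List.mem_filter.1 hv).2).elim (this.1 ·) (this.2 ·)
  have hpair := List.append_subset.2 ⟨hshadow ht, hshadow ht'⟩
  rw [signaturePairs, List.mem_dedup]
  refine List.mem_map.2 ⟨((_, shadow F t), (_, shadow F t')), List.mem_filter.2 ⟨?_, ?_⟩, rfl⟩
  · exact List.pair_mem_product.2 ⟨ht.mem_profiles hw hx hy F K, ht'.mem_profiles hw hx hy F K⟩
  · exact decide_eq_true fun f hf h => hF f hf ⟨hpair h.1, hpair h.2⟩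

theorem IsSignedCover.sum_weight_eq_one (h : IsSignedCover F (std x) (std y) K) (hw : w.Nodup)
    (hx : IsInterval w x) (hy : IsInterval w y) (hu : u ∈ patterns w)
    (hF : ∀ f ∈ F, ¬(f.1 ∈ intervals u ∧ f.2 ∈ intervals u)) {P : Core → Prop} [DecidablePred P]
    (hP : ∀ k ∈ K, P k ↔ ∃ t, HasTrace w x y u t ∧ k.Admits t) :
    ((K.filter P).map Core.weight).sum = 1 := by
  have hmem {k} : k ∈ K.filter P ↔ ∃ t, HasTrace w x y u t ∧ k ∈ signature K t := by
    simp only [List.mem_filter, decide_eq_true_eq, signature]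
    constructor
    · rintro ⟨hk, hPk⟩
      obtain ⟨t, ht, hkt⟩ := (hP k hk).1 hPk
      exact ⟨t, ht, hk, hkt⟩
    · rintro ⟨t, ht, hk, hkt⟩
      exact ⟨hk, (hP k hk).2 ⟨t, ht, hkt⟩⟩
  have hsub {t} (ht : HasTrace w x y u t) : signature K t ⊆ K.filter P := fun k hk =>
    hmem.2 ⟨t, ht, hk⟩
  refine h.2 _ (List.mem_sublists.2 List.filter_sublist) ?_ fun i hi j hj => ?_
  · obtain ⟨t, ht⟩ := exists_hasTrace x y hu
    exact fun hnil => h.1 _ (ht.mem_signaturePairs ht hw hx hy hF K)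
      (List.eq_nil_of_subset_nil (hnil ▸ hsub ht))
  · obtain ⟨t, ht, hit⟩ := hmem.1 hi
    obtain ⟨t', ht', hjt'⟩ := hmem.1 hj
    exact ⟨_, ht.mem_signaturePairs ht' hw hx hy hF K, hit, hsub ht, hjt', hsub ht'⟩

theorem IsProper.exists_perm (h : IsProper (std x) (std y) K) (hw : w.Nodup)
    (hx : IsInterval w x) (hy : IsInterval w y) (hxy : x.Disjoint y) {k : Core} (hk : k ∈ K) :
    ∃ α : PPerm, 2 ≤ α.1 ∧ α.1 < w.length ∧
      ∀ u, u ∈ patterns (word α) ↔ ∃ t, HasTrace w x y u t ∧ k.Admits t := by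
  obtain ⟨hkx, hky, hk2, hklt⟩ := h.2 k hk
  obtain ⟨a, ha, hak⟩ := mem_patterns.1 (mem_patterns_std.1 hkx)
  obtain ⟨b, hb, hbk⟩ := mem_patterns.1 (mem_patterns_std.1 hky)
  obtain ⟨α, hα⟩ := exists_std_word_eq (s := shrink w x y a b) (hw.filter _)
  have hlen : α.1 = (shrink w x y a b).length := length_word α ▸ length_eq_of_std_eq hα
  rw [← hak, ← hbk] at hk2 hklt
  simp only [length_std] at hk2 hklt
  refine ⟨α, ?_, hlen ▸ length_shrink_lt hw hx hy hklt, fun u => ?_⟩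
  · exact hlen ▸ hk2.trans (length_add_length_le_length_shrink hw hx hy hxy ha hb)
  · simp only [Core.Admits, ← hak, ← hbk, mem_patterns_std, mem_patterns_congr hα]
    exact mem_patterns_shrink_iff hw hx hy hxy ha hb

theorem Annihilates.of_certificate (known : List {φ : Word × Word // Annihilates φ})
    (K : List Core) (h : Certificate (known.map Subtype.val) x y K) : Annihilates (x, y) := by
  obtain ⟨hapart, hproper, hcover⟩ := h
  intro π
  induction hn : π.1 using Nat.strong_induction_on generalizing π with | _ n ih
  subst hn
  intro hxπ hyπ
  obtain ⟨x, hx, rfl⟩ := mem_intervals.1 hxπ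
  obtain ⟨y, hy, rfl⟩ := mem_intervals.1 hyπ
  have hw := nodup_word π
  have hxy := IsInterval.disjoint_of_apart hw hx hy hapart
  choose! α hα2 hαlt hα using fun k (hk : k ∈ K) => hproper.exists_perm hw hx hy hxy hk
  rw [length_word] at hαlt
  have hπ : 2 < π.1 := by
    obtain ⟨k, hk⟩ := List.exists_mem_of_ne_nil K hproper.1
    exact (hα2 k hk).trans_lt (hαlt k hk)
  have hαπ {k} (hk : k ∈ K) : Le (α k) π := by
    obtain ⟨-, ⟨s, hs, -, -, hstd⟩, -⟩ := (hα k hk _).1 (std_mem_patterns (List.Sublist.refl _))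
    exact le_iff_std_word_mem_patterns.2 (mem_patterns.2 ⟨s, hs, hstd⟩)
  refine mu_eq_zero_of_signed_cover ?_ K Core.weight α (fun k hk => ⟨?_, ?_⟩)
    fun lam _ hlam hmu => ?_
  · exact lt_iff_le_and_length_lt.2 ⟨one_le (by omega), by simp only [one]; omega⟩
  · exact lt_iff_le_and_length_lt.2 ⟨one_le (by have := hα2 k hk; omega), hα2 k hk⟩
  · exact lt_iff_le_and_length_lt.2 ⟨hαπ hk, hαlt k hk⟩
  refine hcover.sum_weight_eq_one hw hx hy (le_iff_std_word_mem_patterns.1 hlam.1) ?_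
    fun k hk => le_iff_std_word_mem_patterns.trans (hα k hk _)
  have hint := intervals_subset_of_std_eq (std_std (word lam))
  refine fun f hf hfu => hmu ?_
  rcases List.mem_cons.1 hf with rfl | hf
  · exact ih _ hlam.length_lt lam rfl (hint hfu.1) (hint hfu.2)
  · obtain ⟨φ, -, rfl⟩ := List.mem_map.1 hf
    exact φ.2 lam (hint hfu.1) (hint hfu.2)

end Certificates

theorem HasIntervalCopy.std_word_mem_intervals {π α : PPerm} (h : HasIntervalCopy π α) :
    std (word α) ∈ intervals (word π) := by
  obtain ⟨k, p⟩ := α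
  obtain ⟨f, i, v, hf : ∀ a : Fin k, (f a : ℕ) = i + a, hv, hp⟩ := h
  let y := List.ofFn fun a => (π.2 (f a) : ℕ)
  have hfi (a : Fin k) : (π.2 (f a) : ℕ) = (word π)[i + a]'(by
      rw [length_word, ← hf]; exact (f a).2) := by
    simp [word, ← hf]
  have hik : k ≤ π.1 - i := by
    by_contra hlt
    let last : Fin k := ⟨k - 1, by omega⟩
    have hlast : (f last : ℕ) = i + (k - 1) := hf last
    have := (f last).2
    omega
  have hy : y = ((word π).drop i).take k := by
    refine List.ext_getElem ?_ fun a ha _ => ?_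
    · simpa [y, length_word] using hik
    · simp only [y, List.getElem_ofFn, List.getElem_take, List.getElem_drop, hfi]
  have hrange : y.Perm (List.range' v k) := by
    have hnodup : y.Nodup := List.nodup_ofFn.2 fun a b hab => Fin.ext <| by
      have := congrArg Fin.val (π.2.injective (Fin.ext hab))
      rw [hf, hf] at this
      omega
    refine (hnodup.subperm fun c hc => ?_).perm_of_length_le (by simp [y])
    obtain ⟨a, rfl⟩ := List.mem_ofFn.1 hc
    simpa using hv a
  have hyπ : y <:+: word π :=
    hy ▸ (List.take_prefix _ _).isInfix.trans (List.drop_suffix _ _).isInfix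
  refine mem_intervals.2 ⟨y, ⟨hyπ, fun c _ hcy => ?_⟩, std_word_eq_iff.2 hp⟩
  have hmem (d : ℕ) : d ∈ y ↔ v ≤ d ∧ d < v + k := by rw [hrange.mem_iff, List.mem_range'_1]
  simp only [hmem] at hcy ⊢
  rcases lt_or_ge c v with h | h
  · exact .inl fun d hd => h.trans_le hd.1
  · exact .inr fun d hd => by omega

/- Names list 1-indexed values, words list 0-indexed ones. The covers were found by computer
search. -/

theorem annihilates_12_21 : Annihilates ([0, 1], [1, 0]) :=
  .of_certificate
    []
    [⟨1, [0], [1, 0]⟩, ⟨1, [0, 1], [0]⟩, ⟨-1, [0], [0]⟩]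
    (by decide +kernel)

theorem annihilates_123 : Annihilates ([0, 1, 2], []) :=
  .of_certificate
    []
    [⟨1, [0, 1], []⟩]
    (by decide +kernel)

theorem annihilates_321 : Annihilates ([2, 1, 0], []) :=
  .of_certificate
    []
    [⟨1, [1, 0], []⟩]
    (by decide +kernel)

theorem annihilates_21354 : Annihilates ([1, 0, 2, 4, 3], []) :=
  .of_certificate
    [⟨_, annihilates_12_21⟩, ⟨_, annihilates_123⟩]
    [⟨1, [1, 0, 3, 2], []⟩]
    (by decide +kernel)

theorem annihilates_23145 : Annihilates ([1, 2, 0, 3, 4], []) :=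
  .of_certificate
    [⟨_, annihilates_12_21⟩, ⟨_, annihilates_123⟩]
    [⟨1, [1, 2, 0, 3], []⟩]
    (by decide +kernel)

theorem annihilates_12534 : Annihilates ([0, 1, 4, 2, 3], []) :=
  .of_certificate
    [⟨_, annihilates_12_21⟩, ⟨_, annihilates_123⟩]
    [⟨1, [0, 3, 1, 2], []⟩]
    (by decide +kernel)

theorem annihilates_2431_213 : Annihilates ([1, 3, 2, 0], [1, 0, 2]) :=
  .of_certificate
    [⟨_, annihilates_12_21⟩, ⟨_, annihilates_321⟩]
    [⟨1, [1, 3, 2, 0], [1, 0]⟩, ⟨1, [0, 2, 1], [1, 0, 2]⟩, ⟨1, [1, 2, 0], [0, 1]⟩,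
     ⟨-1, [0, 2, 1], [1, 0]⟩, ⟨-1, [1, 2, 0], [0]⟩, ⟨-1, [0, 1], [0, 1]⟩, ⟨1, [0, 1], [0]⟩]
    (by decide +kernel)

theorem annihilates_3241_132 : Annihilates ([2, 1, 3, 0], [0, 2, 1]) :=
  .of_certificate
    [⟨_, annihilates_12_21⟩, ⟨_, annihilates_321⟩]
    [⟨1, [2, 1, 3, 0], [1, 0]⟩, ⟨1, [1, 0, 2], [0, 2, 1]⟩, ⟨1, [1, 2, 0], [0, 1]⟩,
     ⟨-1, [1, 0, 2], [1, 0]⟩, ⟨-1, [1, 2, 0], [0]⟩, ⟨-1, [0, 1], [0, 1]⟩, ⟨1, [0, 1], [0]⟩]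
    (by decide +kernel)

theorem annihilates_2314_312 : Annihilates ([1, 2, 0, 3], [2, 0, 1]) :=
  .of_certificate
    [⟨_, annihilates_12_21⟩, ⟨_, annihilates_123⟩]
    [⟨1, [1, 2, 0, 3], [0, 1]⟩, ⟨1, [1, 2, 0], [2, 0, 1]⟩, ⟨1, [1, 0, 2], [1, 0]⟩,
     ⟨-1, [1, 2, 0], [0, 1]⟩, ⟨-1, [1, 0, 2], [0]⟩, ⟨-1, [1, 0], [1, 0]⟩, ⟨1, [1, 0], [0]⟩]
    (by decide +kernel)

theorem annihilates_1423_231 : Annihilates ([0, 3, 1, 2], [1, 2, 0]) :=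
  .of_certificate
    [⟨_, annihilates_12_21⟩, ⟨_, annihilates_123⟩]
    [⟨1, [0, 3, 1, 2], [0, 1]⟩, ⟨1, [2, 0, 1], [1, 2, 0]⟩, ⟨1, [0, 2, 1], [1, 0]⟩,
     ⟨-1, [2, 0, 1], [0, 1]⟩, ⟨-1, [0, 2, 1], [0]⟩, ⟨-1, [1, 0], [1, 0]⟩, ⟨1, [1, 0], [0]⟩]
    (by decide +kernel)

theorem annihilates_2431_2143 : Annihilates ([1, 3, 2, 0], [1, 0, 3, 2]) :=
  .of_certificate
    [⟨_, annihilates_12_21⟩, ⟨_, annihilates_321⟩, ⟨_, annihilates_2431_213⟩]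
    [⟨1, [1, 3, 2, 0], [0, 2, 1]⟩, ⟨1, [0, 2, 1], [1, 0, 3, 2]⟩, ⟨-1, [0, 2, 1], [0, 2, 1]⟩]
    (by decide +kernel)

theorem annihilates_3241_2143 : Annihilates ([2, 1, 3, 0], [1, 0, 3, 2]) :=
  .of_certificate
    [⟨_, annihilates_12_21⟩, ⟨_, annihilates_321⟩, ⟨_, annihilates_3241_132⟩]
    [⟨1, [2, 1, 3, 0], [1, 0, 2]⟩, ⟨1, [1, 0, 2], [1, 0, 3, 2]⟩, ⟨-1, [1, 0, 2], [1, 0, 2]⟩]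
    (by decide +kernel)

theorem annihilates_25134_231 : Annihilates ([1, 4, 0, 2, 3], [1, 2, 0]) :=
  .of_certificate
    [⟨_, annihilates_12_21⟩, ⟨_, annihilates_123⟩, ⟨_, annihilates_1423_231⟩]
    [⟨1, [1, 3, 0, 2], [1, 2, 0]⟩, ⟨1, [1, 4, 0, 2, 3], [0, 1]⟩, ⟨-1, [1, 3, 0, 2], [0, 1]⟩]
    (by decide +kernel)

theorem annihilates_23514_312 : Annihilates ([1, 2, 4, 0, 3], [2, 0, 1]) :=
  .of_certificate
    [⟨_, annihilates_12_21⟩, ⟨_, annihilates_123⟩, ⟨_, annihilates_2314_312⟩]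
    [⟨1, [1, 3, 0, 2], [2, 0, 1]⟩, ⟨1, [1, 2, 4, 0, 3], [0, 1]⟩, ⟨-1, [1, 3, 0, 2], [0, 1]⟩]
    (by decide +kernel)

theorem annihilates_25134_23514 : Annihilates ([1, 4, 0, 2, 3], [1, 2, 4, 0, 3]) :=
  .of_certificate
    [⟨_, annihilates_12_21⟩, ⟨_, annihilates_123⟩, ⟨_, annihilates_1423_231⟩,
     ⟨_, annihilates_25134_231⟩, ⟨_, annihilates_23514_312⟩]
    [⟨1, [1, 4, 0, 2, 3], [1, 3, 0, 2]⟩, ⟨1, [1, 3, 0, 2], [1, 2, 4, 0, 3]⟩,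
     ⟨-1, [1, 3, 0, 2], [1, 3, 0, 2]⟩]
    (by decide +kernel)

theorem annihilates_215463 : Annihilates ([1, 0, 4, 3, 5, 2], []) :=
  .of_certificate
    [⟨_, annihilates_12_21⟩, ⟨_, annihilates_321⟩, ⟨_, annihilates_3241_2143⟩]
    [⟨1, [0, 3, 2, 4, 1], []⟩, ⟨1, [1, 0, 3, 2, 4], []⟩, ⟨-1, [0, 2, 1, 3], []⟩]
    (by decide +kernel)

theorem annihilates_236145 : Annihilates ([1, 2, 5, 0, 3, 4], []) :=
  .of_certificate
    [⟨_, annihilates_12_21⟩, ⟨_, annihilates_123⟩, ⟨_, annihilates_23145⟩,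
     ⟨_, annihilates_12534⟩, ⟨_, annihilates_1423_231⟩, ⟨_, annihilates_25134_231⟩,
     ⟨_, annihilates_23514_312⟩, ⟨_, annihilates_25134_23514⟩]
    [⟨1, [1, 4, 0, 2, 3], []⟩, ⟨1, [1, 2, 4, 0, 3], []⟩, ⟨-1, [1, 3, 0, 2], []⟩]
    (by decide +kernel)

theorem annihilates_214653 : Annihilates ([1, 0, 3, 5, 4, 2], []) :=
  .of_certificate
    [⟨_, annihilates_12_21⟩, ⟨_, annihilates_321⟩, ⟨_, annihilates_21354⟩,
     ⟨_, annihilates_2431_213⟩, ⟨_, annihilates_2431_2143⟩]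
    [⟨1, [0, 2, 4, 3, 1], []⟩, ⟨1, [1, 0, 3, 2], []⟩, ⟨-1, [0, 2, 1], []⟩]
    (by decide +kernel)

/-- **(Theorem `thm-annihil`.)**  Each of `215463`, `236145` and `214653` is
an annihilator: every permutation `π` containing an interval copy of one of
them satisfies `μ(1,π) = 0`. -/
theorem annihilators_215463_236145_214653 (π : PPerm)
    (h : HasIntervalCopy π p215463 ∨ HasIntervalCopy π p236145 ∨
      HasIntervalCopy π p214653) :
    mu PPerm.one π = 0 := by
  have annihilates {w : Word} (hw : Annihilates (w, [])) (hπ : w ∈ intervals (word π)) :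
      mu one π = 0 := hw π hπ (mem_intervals.2 ⟨[], isInterval_nil _, rfl⟩)
  rcases h with h | h | h
  · exact annihilates annihilates_215463 h.std_word_mem_intervals
  · exact annihilates annihilates_236145 h.std_word_mem_intervals
  · exact annihilates annihilates_214653 h.std_word_mem_intervals
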